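/- Let α, β > −1, n ≥ 1, let u : ℝ → ℝ be differentiable, and let x_0,…,x_n be distinct points such that u(x_0),…,u(x_{n−1}) are the n distinct roots of the Jacobi polynomial G = P_n^{α,β+1}, u(x_n) = 1, u(x_0),…,u(x_n) are pairwise distinct, and u'(x_i) ≠ 0 for all i. Let L_j be the generalized Lagrange functions on these nodes and D the matrix with entries d_{kj} = L_j'(x_k). Then for every j with 0 ≤ j ≤ n−1, the entry in the last row satisfies d_{nj} = 2 u'(x_n) Γ(α+n+1) / ( Γ(α+1) · n! · (α+β+n+2) · P_{n−1}^{α+1,β+2}(u(x_j)) · (u(x_n) − u(x_j)) · (u(x_j) − u(x_n)) ). -/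

import Mathlib

/-- Jacobi polynomials `P_n^{α,β}` defined by the three-term recurrence. -/
noncomputable def jacobiP (α β : ℝ) : ℕ → ℝ → ℝ
  | 0, _ => 1
  | 1, x => (α + β + 2) * x / 2 + (α - β) / 2
  | K + 2, x =>
      ((2 * ((K : ℝ) + 1) + α + β + 1) * (2 * ((K : ℝ) + 1) + α + β + 2) /
            (2 * (((K : ℝ) + 1) + 1) * (((K : ℝ) + 1) + α + β + 1)) * x -
          (β ^ 2 - α ^ 2) * (2 * ((K : ℝ) + 1) + α + β + 1) /
            (2 * (((K : ℝ) + 1) + 1) * (((K : ℝ) + 1) + α + β + 1) *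
              (2 * ((K : ℝ) + 1) + α + β))) *
        jacobiP α β (K + 1) x -
      (((K : ℝ) + 1) + α) * (((K : ℝ) + 1) + β) * (2 * ((K : ℝ) + 1) + α + β + 2) /
            ((((K : ℝ) + 1) + 1) * (((K : ℝ) + 1) + α + β + 1) * (2 * ((K : ℝ) + 1) + α + β)) *
        jacobiP α β K x

open Finset

/-- `glW u x t = ∏ i, (u t − u (x i))`. -/
noncomputable def glW (u : ℝ → ℝ) {n : ℕ} (x : Fin (n + 1) → ℝ) : ℝ → ℝ :=
  fun t => ∏ i, (u t - u (x i))

/-- Generalized Lagrange function `L_j(t) = κ_j ∏_{i ≠ j} (u t − u (x i))`,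
with `κ_j = u'(x_j) / w'(x_j)`. -/
noncomputable def glL (u : ℝ → ℝ) {n : ℕ} (x : Fin (n + 1) → ℝ) (j : Fin (n + 1)) : ℝ → ℝ :=
  fun t => (deriv u (x j) / deriv (glW u x) (x j)) *
    ∏ i ∈ Finset.univ.erase j, (u t - u (x i))

/-- Coefficients of the Jacobi polynomial in powers of `(y - 1) / 2`, with `s = α + β`. -/
noncomputable def jc (α s : ℝ) (n : ℕ) : ℕ → ℝ
  | 0 => Real.Gamma (α + (n : ℝ) + 1) / (Real.Gamma (α + 1) * (n.factorial : ℝ))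
  | k + 1 => jc α s n k * (((n : ℝ) - k) * ((n : ℝ) + k + 1 + s)) /
      (((k : ℝ) + 1) * ((k : ℝ) + 1 + α))

lemma jc_zero_succ (α s : ℝ) (hα : -1 < α) (n : ℕ) :
    jc α s (n + 1) 0 * ((n : ℝ) + 1) = jc α s n 0 * ((n : ℝ) + 1 + α) := by
  have h1 : (0 : ℝ) ≤ n := n.cast_nonneg
  have hg : Real.Gamma (α + 1) ≠ 0 := (Real.Gamma_pos_of_pos (by linarith)).ne'
  have hf : (n.factorial : ℝ) ≠ 0 := by positivity
  have h2 : Real.Gamma (α + ((n + 1 : ℕ) : ℝ) + 1)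
      = (α + n + 1) * Real.Gamma (α + n + 1) := by
    rw [← Real.Gamma_add_one (by linarith)]
    congr 1
    push_cast
    ring
  simp only [jc, h2, Nat.factorial_succ]
  push_cast
  field_simp
  ring

lemma jc_succ (α s : ℝ) (hα : -1 < α) (n k : ℕ) :
    jc α s n (k + 1) * (((k : ℝ) + 1) * ((k : ℝ) + 1 + α)) =
      jc α s n k * (((n : ℝ) - k) * ((n : ℝ) + k + 1 + s)) := by
  have h1 : (0 : ℝ) ≤ k := k.cast_nonneg
  have h2 : (k : ℝ) + 1 + α ≠ 0 := by linarith
  have h3 : (k : ℝ) + 1 ≠ 0 := by linarith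
  simp only [jc]
  field_simp

lemma jc_eq_zero (α s : ℝ) (n m : ℕ) : jc α s n (n + 1 + m) = 0 := by
  induction m with
  | zero => simp [jc]
  | succ m ih => rw [← add_assoc, jc, ih]; simp

lemma jc_step (α s : ℝ) (hα : -1 < α) (n k : ℕ) :
    jc α s (n + 1) k * (((n : ℝ) + 1 - k) * ((n : ℝ) + s + 1)) =
      jc α s n k * (((n : ℝ) + 1 + α) * ((n : ℝ) + 1 + k + s)) := by
  induction k with
  | zero =>
    have := jc_zero_succ α s hα n
    push_cast
    linear_combination (n + s + 1) * this
  | succ k ih =>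
    have h1 : (0 : ℝ) ≤ k := k.cast_nonneg
    have h2 : (k : ℝ) + 1 + α ≠ 0 := by linarith
    have h3 : (k : ℝ) + 1 ≠ 0 := by linarith
    have e1 := jc_succ α s hα (n + 1) k
    have e2 := jc_succ α s hα n k
    have h4 : (((k : ℝ) + 1) * ((k : ℝ) + 1 + α)) ≠ 0 := mul_ne_zero h3 h2
    apply mul_right_cancel₀ h4
    push_cast at *
    linear_combination ((n - k) * (n + s + 1)) * e1
      - ((n + 1 + α) * (n + 2 + k + s)) * e2 + ((n + k + 2 + s) * (n - k)) * ih

lemma jc_deriv (α s : ℝ) (hα : -1 < α) (n k : ℕ) :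
    ((k : ℝ) + 1) * jc α s (n + 1) (k + 1) = (n + s + 2) * jc (α + 1) (s + 2) n k := by
  induction k with
  | zero =>
    have e1 := jc_succ α s hα (n + 1) 0
    have h2 : α + 1 ≠ 0 := by linarith
    have hg : Real.Gamma (α + 1) ≠ 0 := (Real.Gamma_pos_of_pos (by linarith)).ne'
    have hf : (n.factorial : ℝ) ≠ 0 := by positivity
    have e3 : jc α s (n + 1) 0 * (n + 1) = jc (α + 1) (s + 2) n 0 * (α + 1) := by
      have h3 : Real.Gamma (α + 1 + 1) = (α + 1) * Real.Gamma (α + 1) :=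
        Real.Gamma_add_one h2
      have h4 : α + ((n + 1 : ℕ) : ℝ) + 1 = α + 1 + n + 1 := by push_cast; ring
      simp only [jc, h3, h4, Nat.factorial_succ]
      push_cast
      field_simp
    apply mul_right_cancel₀ h2
    push_cast at *
    linear_combination e1 + (n + 2 + s) * e3
  | succ k ih =>
    have h1 : (0 : ℝ) ≤ k := k.cast_nonneg
    have e1 := jc_succ α s hα (n + 1) (k + 1)
    have e2 := jc_succ (α + 1) (s + 2) (by linarith) n k
    have h4 : (((k : ℝ) + 1) * ((k : ℝ) + 2 + α)) ≠ 0 :=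
      mul_ne_zero (by linarith) (by linarith)
    apply mul_right_cancel₀ h4
    push_cast at *
    linear_combination (k + 1) * e1 - (n + s + 2) * e2 + ((n - k) * (n + k + 3 + s)) * ih

/-- The previous coefficient. -/
noncomputable def jcp (α s : ℝ) (n : ℕ) : ℕ → ℝ
  | 0 => 0
  | k + 1 => jc α s n k

lemma jcp_rel (α s : ℝ) (hα : -1 < α) (n k : ℕ) :
    jc α s n k * ((k : ℝ) * (k + α)) =
      jcp α s n k * (((n : ℝ) + 1 - k) * ((n : ℝ) + k + s)) := by
  cases k with
  | zero => simp [jcp]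
  | succ k =>
    have := jc_succ α s hα n k
    simp only [jcp]
    push_cast
    linear_combination this

lemma jc_rec (α s : ℝ) (hα : -1 < α) (hs : -1 < s) (n k : ℕ) :
    jc α s (n + 2) k * (2 * (n + 2) * (n + 2 + s) * (2 * n + 2 + s)) =
      (2 * n + 3 + s) * ((2 * n + 4 + s) * (2 * n + 2 + s) - (s - 2 * α) * s) * jc α s (n + 1) k
      + 2 * (2 * n + 3 + s) * (2 * n + 4 + s) * (2 * n + 2 + s) * jcp α s (n + 1) k
      - 2 * (n + 1 + α) * (n + 1 + s - α) * (2 * n + 4 + s) * jc α s n k := by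
  have e1 := jc_step α s hα n k
  have e2 := jc_step α s hα (n + 1) k
  have e3 := jcp_rel α s hα (n + 1) k
  have hn : (0 : ℝ) ≤ n := n.cast_nonneg
  have hk : (0 : ℝ) ≤ k := k.cast_nonneg
  push_cast at *
  have q1 : (n : ℝ) + s + 1 ≠ 0 := by linarith
  have q2 : (n : ℝ) + 1 + s + 1 ≠ 0 := by linarith
  have q3 : (n : ℝ) + 1 + α ≠ 0 := by linarith
  rcases lt_trichotomy k (n + 1) with h | h | h
  · have h' : (k : ℝ) + 1 ≤ n + 1 := by exact_mod_cast h
    have q4 : (n : ℝ) + 1 - k ≠ 0 := by linarith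
    have q5 : (n : ℝ) + 1 + 1 - k ≠ 0 := by linarith
    by_cases hk0 : k = 0
    · subst hk0
      simp only [jcp] at *
      push_cast at *
      have r1 : jc α s n 0 = jc α s (n + 1) 0 * ((n : ℝ) + 1) / (n + 1 + α) := by
        rw [eq_div_iff q3]; linear_combination - jc_zero_succ α s hα n
      have r2 : jc α s (n + 2) 0 = jc α s (n + 1) 0 * ((n : ℝ) + 2 + α) / (n + 2) := by
        rw [eq_div_iff (by linarith)]
        have := jc_zero_succ α s hα (n + 1)
        push_cast at this
        linear_combination this
      rw [r1, r2]
      field_simp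
      ring
    have hk1 : (1 : ℝ) ≤ k := by exact_mod_cast Nat.one_le_iff_ne_zero.mpr hk0
    have q6 : (n : ℝ) + 1 + k + s ≠ 0 := by linarith
    have r1 : jc α s n k = jc α s (n + 1) k * (((n : ℝ) + 1 - k) * ((n : ℝ) + s + 1)) /
        (((n : ℝ) + 1 + α) * ((n : ℝ) + 1 + k + s)) := by
      rw [eq_div_iff (mul_ne_zero q3 q6), e1]
    have r2 : jc α s (n + 2) k = jc α s (n + 1) k *
        (((n : ℝ) + 1 + 1 + α) * ((n : ℝ) + 1 + 1 + k + s)) /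
        (((n : ℝ) + 1 + 1 - k) * ((n : ℝ) + 1 + s + 1)) := by
      rw [eq_div_iff (mul_ne_zero q5 q2), e2]
    have r3 : jcp α s (n + 1) k = jc α s (n + 1) k * ((k : ℝ) * (k + α)) /
        (((n : ℝ) + 1 + 1 - k) * ((n : ℝ) + 1 + k + s)) := by
      rw [eq_div_iff (mul_ne_zero q5 q6), e3]
    rw [r1, r2, r3]
    field_simp
    ring
  · have z := jc_eq_zero α s n 0
    subst h
    simp only [add_zero] at z
    rw [z]
    push_cast at *
    linear_combination (2 * (n + 2) * (2 * n + 2 + s)) * e2 +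
      (2 * (2 * n + 3 + s) * (2 * n + 4 + s)) * e3
  · obtain ⟨m, rfl⟩ := Nat.exists_eq_add_of_lt h
    have z1 := jc_eq_zero α s n (m + 1)
    have z2 := jc_eq_zero α s (n + 1) m
    rw [show n + 1 + m + 1 = n + 1 + (m + 1) by ring, z1,
      show n + 1 + (m + 1) = n + 1 + 1 + m by ring, z2]
    cases m with
    | zero =>
      have a1 := jc_succ α s hα (n + 2) (n + 1)
      have a2 := jc_step α s hα (n + 1) (n + 1)
      push_cast at *
      simp only [add_zero, jcp]
      have q7 : (n : ℝ) + 1 + 1 + α ≠ 0 := by linarith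
      have q8 : (n : ℝ) + 1 + 1 ≠ 0 := by linarith
      have r2 : jc α s (n + 2) (n + 1) = jc α s (n + 1) (n + 1) *
        (((n : ℝ) + 1 + 1 + α) * ((n : ℝ) + 1 + 1 + (n + 1) + s)) /
        ((n : ℝ) + 1 + s + 1) := by
        rw [eq_div_iff q2]
        linear_combination a2
      have r1 : jc α s (n + 2) (n + 1 + 1) = jc α s (n + 2) (n + 1) *
          ((n : ℝ) + 2 + (n + 1) + 1 + s) / (((n : ℝ) + 1 + 1) * ((n : ℝ) + 1 + 1 + α)) := by
        rw [eq_div_iff (mul_ne_zero q8 q7)]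
        linear_combination a1
      rw [r1, r2]
      field_simp
      ring
    | succ m =>
      have z3 := jc_eq_zero α s (n + 2) m
      have z4 := jc_eq_zero α s (n + 1) m
      rw [show n + 1 + 1 + (m + 1) = n + 2 + 1 + m by ring, z3]
      rw [show n + 2 + 1 + m = (n + 1 + 1 + m) + 1 by ring, jcp, z4]
      simp

lemma jc_sum_ext (α s : ℝ) (n m : ℕ) (t : ℝ) :
    ∑ k ∈ Finset.range (n + 1 + m), jc α s n k * t ^ k =
      ∑ k ∈ Finset.range (n + 1), jc α s n k * t ^ k := by
  rw [Finset.sum_range_add]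
  simp [jc_eq_zero]

lemma jcp_sum (α s : ℝ) (n : ℕ) (t : ℝ) :
    ∑ k ∈ Finset.range (n + 2), jcp α s n k * t ^ k =
      t * ∑ k ∈ Finset.range (n + 1), jc α s n k * t ^ k := by
  rw [Finset.sum_range_succ', Finset.mul_sum]
  simp only [jcp, zero_mul, add_zero]
  exact Finset.sum_congr rfl fun k _ => by ring

lemma jacobi_eq (α β : ℝ) (hα : -1 < α) (hs : -1 < α + β) (n : ℕ) (y : ℝ) :
    jacobiP α β n y =
      ∑ k ∈ Finset.range (n + 1), jc α (α + β) n k * ((y - 1) / 2) ^ k := by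
  have hg : Real.Gamma (α + 1) ≠ 0 := (Real.Gamma_pos_of_pos (by linarith)).ne'
  have hα1 : α + 1 ≠ 0 := by linarith
  induction n using Nat.twoStepInduction with
  | zero => simp [jacobiP, jc, hg]
  | one =>
    have h3 : Real.Gamma (α + 1 + 1) = (α + 1) * Real.Gamma (α + 1) :=
        Real.Gamma_add_one hα1
    simp [Finset.sum_range_succ, jacobiP, jc, h3]
    have hα2 : 1 + α ≠ 0 := by linarith
    field_simp
    ring
  | more n ih0 ih1 =>
    have hn : (0 : ℝ) ≤ n := n.cast_nonneg
    rw [jacobiP, ih0, ih1]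
    set t := (y - 1) / 2 with ht
    have hy : y = 2 * t + 1 := by rw [ht]; ring
    have E : (∑ k ∈ Finset.range (n + 2 + 1), jc α (α + β) (n + 2) k * t ^ k) *
        (2 * (n + 2) * (n + 2 + (α + β)) * (2 * n + 2 + (α + β))) =
        (2 * n + 3 + (α + β)) * ((2 * n + 4 + (α + β)) * (2 * n + 2 + (α + β))
          - ((α + β) - 2 * α) * (α + β)) *
            (∑ k ∈ Finset.range (n + 1 + 1), jc α (α + β) (n + 1) k * t ^ k)
        + 2 * (2 * n + 3 + (α + β)) * (2 * n + 4 + (α + β)) * (2 * n + 2 + (α + β)) *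
            (t * ∑ k ∈ Finset.range (n + 1 + 1), jc α (α + β) (n + 1) k * t ^ k)
        - 2 * (n + 1 + α) * (n + 1 + (α + β) - α) * (2 * n + 4 + (α + β)) *
            (∑ k ∈ Finset.range (n + 1), jc α (α + β) n k * t ^ k) := by
      rw [← jcp_sum, ← jc_sum_ext α _ (n + 1) 1, ← jc_sum_ext α _ n 2]
      rw [Finset.sum_mul, Finset.mul_sum, Finset.mul_sum, Finset.mul_sum,
        ← Finset.sum_add_distrib, ← Finset.sum_sub_distrib]
      refine Finset.sum_congr rfl fun k _ => ?_
      linear_combination t ^ k * jc_rec α (α + β) hα hs n k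
    generalize (∑ k ∈ Finset.range (n + 2 + 1), jc α (α + β) (n + 2) k * t ^ k) = S2 at *
    generalize (∑ k ∈ Finset.range (n + 1 + 1), jc α (α + β) (n + 1) k * t ^ k) = S1 at *
    generalize (∑ k ∈ Finset.range (n + 1), jc α (α + β) n k * t ^ k) = S0 at *
    have d1 : (n : ℝ) + 2 ≠ 0 := by linarith
    have d2 : (n : ℝ) + 2 + (α + β) ≠ 0 := by linarith
    have d3 : 2 * (n : ℝ) + 2 + (α + β) ≠ 0 := by linarith
    have E2 := eq_div_of_mul_eq (mul_ne_zero (mul_ne_zero (mul_ne_zero two_ne_zero d1) d2) d3) E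
    rw [E2, hy]
    rw [show (n : ℝ) + 1 + 1 = n + 2 by ring, show (n : ℝ) + 1 + α + β + 1 = n + 2 + (α + β) by ring,
      show 2 * ((n : ℝ) + 1) + α + β = 2 * n + 2 + (α + β) by ring]
    clear E E2
    generalize hD3 : 2 * (n : ℝ) + 2 + (α + β) = D3 at *
    generalize hD2 : (n : ℝ) + 2 + (α + β) = D2 at *
    field_simp
    rw [← hD3]
    ring

open Polynomial in
/-- The Jacobi polynomial as a polynomial. -/
noncomputable def jpoly (α s : ℝ) (n : ℕ) : ℝ[X] :=
  ∑ k ∈ Finset.range (n + 1), C (jc α s n k) * (C (1 / 2) * (X - C 1)) ^ k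

lemma jpoly_eval (α s : ℝ) (n : ℕ) (y : ℝ) : (jpoly α s n).eval y =
    ∑ k ∈ Finset.range (n + 1), jc α s n k * ((y - 1) / 2) ^ k := by
  simp only [jpoly, Polynomial.eval_finsetSum]
  refine Finset.sum_congr rfl fun k _ => ?_
  simp
  left
  ring

open Polynomial in
lemma jpoly_natDegree (α s : ℝ) (n : ℕ) : (jpoly α s n).natDegree ≤ n := by
  refine natDegree_sum_le_of_forall_le _ _ fun k hk => ?_
  have hk' : k ≤ n := by simpa [Nat.lt_succ_iff] using hk
  refine (natDegree_C_mul_le _ _).trans (natDegree_pow_le.trans ?_)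
  have : (C (1 / 2 : ℝ) * (X - C 1)).natDegree ≤ 1 :=
    (natDegree_C_mul_le _ _).trans (natDegree_X_sub_C_le _)
  nlinarith

open Polynomial in
lemma jpoly_deriv (α s : ℝ) (hα : -1 < α) (n : ℕ) (y : ℝ) :
    (derivative (jpoly α s (n + 1))).eval y =
      (n + s + 2) / 2 * (jpoly (α + 1) (s + 2) n).eval y := by
  rw [jpoly_eval, jpoly, derivative_sum, eval_finsetSum, Finset.sum_range_succ', Finset.mul_sum]
  simp only [pow_zero, mul_one, derivative_C, eval_zero, add_zero]
  refine Finset.sum_congr rfl fun k _ => ?_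
  have := jc_deriv α s hα n k
  simp [derivative_pow]
  rw [show (2 : ℝ)⁻¹ * (y - 1) = (y - 1) / 2 by ring]
  linear_combination ((y - 1) / 2) ^ k / 2 * this

open Polynomial in
lemma poly_factor (n : ℕ) (Q : ℝ[X]) (hd : Q.natDegree ≤ n) (hQ : Q ≠ 0) (v : Fin n → ℝ)
    (hv : Function.Injective v) (hr : ∀ i, Q.eval (v i) = 0) :
    ∃ r : ℝ, r ≠ 0 ∧ Q = C r * ∏ i, (X - C (v i)) := by
  have hdvd : (∏ i, (X - C (v i))) ∣ Q := by
    refine Finset.prod_dvd_of_coprime ?_ fun i _ => dvd_iff_isRoot.mpr (hr i)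
    intro i _ j _ hij
    exact pairwise_coprime_X_sub_C hv hij
  obtain ⟨R, hR⟩ := hdvd
  have hR0 : R ≠ 0 := by rintro rfl; simp at hR; exact hQ hR
  have hm : (∏ i, (X - C (v i))).Monic := monic_prod_of_monic _ _ fun i _ => monic_X_sub_C _
  have hdeg : (∏ i, (X - C (v i))).natDegree = n := by
    rw [natDegree_prod_of_monic _ _ fun i _ => monic_X_sub_C _]
    simp
  have h2 : R.natDegree = 0 := by
    have := hm.natDegree_mul' hR0
    rw [← hR, hdeg] at this
    omega
  obtain ⟨r, rfl⟩ := natDegree_eq_zero.mp h2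
  exact ⟨r, by rintro rfl; simp at hR0, by rw [hR, mul_comm]⟩

lemma deriv_sub_mul (u g f : ℝ → ℝ) (a : ℝ) (hu : DifferentiableAt ℝ u a)
    (hg : DifferentiableAt ℝ g a) (hf : ∀ t, f t = (u t - u a) * g t) :
    deriv f a = deriv u a * g a := by
  have h : f = fun t => (u t - u a) * g t := funext hf
  rw [h]
  have := (hu.hasDerivAt.sub_const (u a)).mul hg.hasDerivAt
  have h2 := this.deriv
  simp at h2
  exact h2

open Polynomial in
theorem gl_jacobi_radau_last_row (α β : ℝ) (hα : -1 < α) (hβ : -1 < β)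
    (n : ℕ) (hn : 1 ≤ n) (u : ℝ → ℝ) (x : Fin (n + 1) → ℝ)
    (hu : Differentiable ℝ u)
    (hx : Function.Injective x)
    (hux : Function.Injective (u ∘ x))
    (hu' : ∀ i, deriv u (x i) ≠ 0)
    (hroots : ∀ i : Fin (n + 1), (i : ℕ) < n → jacobiP α (β + 1) n (u (x i)) = 0)
    (hlast : u (x (Fin.last n)) = 1)
    (j : Fin (n + 1)) (hj : (j : ℕ) < n) :
    deriv (glL u x j) (x (Fin.last n)) =
      2 * deriv u (x (Fin.last n)) * Real.Gamma (α + (n : ℝ) + 1) /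
        (Real.Gamma (α + 1) * (n.factorial : ℝ) * (α + β + (n : ℝ) + 2) *
          jacobiP (α + 1) (β + 2) (n - 1) (u (x j)) *
          (u (x (Fin.last n)) - u (x j)) * (u (x j) - u (x (Fin.last n)))) := by
  obtain ⟨n, rfl⟩ : ∃ m, n = m + 1 := ⟨n - 1, by omega⟩
  obtain ⟨j, rfl⟩ : ∃ j' : Fin (n + 1), j = j'.castSucc := ⟨⟨j, hj⟩, rfl⟩
  set v : Fin (n + 1) → ℝ := fun i => u (x i.castSucc) with hv
  have hvinj : Function.Injective v := fun a b hab =>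
    Fin.castSucc_injective _ (hux hab)
  have hs : -1 < α + (β + 1) := by linarith
  have hnn : (0 : ℝ) ≤ n := n.cast_nonneg
  set Q := jpoly α (α + (β + 1)) (n + 1) with hQ
  have hQe : ∀ y, Q.eval y = jacobiP α (β + 1) (n + 1) y := fun y => by
    rw [jacobi_eq _ _ hα hs, hQ, jpoly_eval]
  have hQ1 : Q.eval 1 = Real.Gamma (α + ((n + 1 : ℕ) : ℝ) + 1) /
      (Real.Gamma (α + 1) * ((n + 1).factorial : ℝ)) := by
    rw [hQ, jpoly_eval, Finset.sum_range_succ']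
    simp [jc]
  have hg1 : 0 < Real.Gamma (α + 1) := Real.Gamma_pos_of_pos (by linarith)
  have hg2 : 0 < Real.Gamma (α + ((n + 1 : ℕ) : ℝ) + 1) :=
    Real.Gamma_pos_of_pos (by push_cast; linarith)
  have hf : (0 : ℝ) < ((n + 1).factorial : ℝ) := by positivity
  have hQ1ne : Q.eval 1 ≠ 0 := by rw [hQ1]; positivity
  have hQ0 : Q ≠ 0 := by intro h; rw [h] at hQ1ne; simp at hQ1ne
  obtain ⟨r, hr, hfac⟩ := poly_factor (n + 1) Q (jpoly_natDegree _ _ _) hQ0 v hvinj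
    (fun i => by rw [hQe]; exact hroots _ i.is_lt)
  have hE1 : Q.eval 1 = r * ((1 - v j) * ∏ i ∈ Finset.univ.erase j, (1 - v i)) := by
    rw [Finset.mul_prod_erase _ (fun i => 1 - v i) (Finset.mem_univ j), hfac]
    simp [eval_prod]
  have hE2 : (derivative Q).eval (v j) = r * ∏ i ∈ Finset.univ.erase j, (v j - v i) := by
    rw [hfac, ← Finset.mul_prod_erase _ (fun i => X - C (v i)) (Finset.mem_univ j)]
    simp [derivative_mul, eval_prod]
  have hE3 : (derivative Q).eval (v j) =
      (n + α + β + 3) / 2 * jacobiP (α + 1) (β + 2) n (v j) := by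
    rw [hQ, jpoly_deriv _ _ hα, jacobi_eq _ _ (by linarith) (by linarith), jpoly_eval,
      show α + (β + 1) + 2 = α + 1 + (β + 2) by ring]
    ring
  have hsplit : ∀ f : Fin (n + 1 + 1) → ℝ, ∏ i ∈ Finset.univ.erase j.castSucc, f i =
      f (Fin.last (n + 1)) * ∏ i ∈ Finset.univ.erase j, f i.castSucc := by
    intro f
    have : Finset.univ.erase j.castSucc =
        insert (Fin.last (n + 1)) ((Finset.univ.erase j).map Fin.castSuccEmb) := by
      ext i
      induction i using Fin.lastCases with
      | last => simp [Fin.ext_iff, j.is_lt.ne']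
      | cast i => simp [Fin.ext_iff]; omega
    rw [this, Finset.prod_insert (by simp), Finset.prod_map]
    rfl
  have hdW : deriv (glW u x) (x j.castSucc) = deriv u (x j.castSucc) *
      ((v j - 1) * ∏ i ∈ Finset.univ.erase j, (v j - v i)) := by
    rw [deriv_sub_mul u (fun t => ∏ i ∈ Finset.univ.erase j.castSucc, (u t - u (x i)))
      (glW u x) _ (hu _) (by fun_prop) (fun t => by
        rw [glW, Finset.mul_prod_erase _ (fun i => u t - u (x i)) (Finset.mem_univ _)])]
    rw [hsplit, hlast]
  have hdL : deriv (glL u x j.castSucc) (x (Fin.last (n + 1))) = deriv u (x (Fin.last (n + 1))) *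
      ((deriv u (x j.castSucc) / deriv (glW u x) (x j.castSucc)) *
        ∏ i ∈ Finset.univ.erase j, (1 - v i)) := by
    rw [deriv_sub_mul u (fun t => (deriv u (x j.castSucc) / deriv (glW u x) (x j.castSucc)) *
      ∏ i ∈ Finset.univ.erase j, (u t - u (x i.castSucc)))
      (glL u x j.castSucc) _ (hu _) (by fun_prop) (fun t => by
        rw [glL, hsplit]; ring)]
    rw [hlast]
  have hvj : u (x j.castSucc) = v j := rfl
  have hne : v j - 1 ≠ 0 := by
    intro h
    have h2 : u (x j.castSucc) = u (x (Fin.last (n + 1))) := by rw [hlast, hvj]; linarith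
    exact (Fin.castSucc_lt_last j).ne (hux h2)
  have hne' : 1 - v j ≠ 0 := fun h => hne (by linarith)
  have hP : ∏ i ∈ Finset.univ.erase j, (v j - v i) ≠ 0 := by
    refine Finset.prod_ne_zero_iff.mpr fun i hi => sub_ne_zero.mpr fun h => ?_
    exact (Finset.ne_of_mem_erase hi) (hvinj h).symm
  rw [hdL, hdW, hlast, hvj, Nat.add_sub_cancel]
  have hu1 := hu' j.castSucc
  generalize ∏ i ∈ Finset.univ.erase j, (v j - v i) = A at *
  generalize ∏ i ∈ Finset.univ.erase j, (1 - v i) = B at *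
  rw [hE2] at hE3
  rw [hQ1, div_eq_iff (by positivity)] at hE1
  rw [hE1]
  have hJ : jacobiP (α + 1) (β + 2) n (v j) = 2 * r * A / (n + α + β + 3) := by
    rw [eq_div_iff (by linarith)]
    linear_combination -2 * hE3
  rw [hJ]
  have hd : (n : ℝ) + α + β + 3 ≠ 0 := by linarith
  rw [show α + β + ((n + 1 : ℕ) : ℝ) + 2 = n + α + β + 3 by push_cast; ring]
  field_simp
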